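/- Let F be a field, V a finite set, and A a skew-symmetric matrix over F indexed by V. Let T ⊆ V, let k be the rank of the submatrix of A consisting of the columns indexed by T, let q be a natural number, and let 𝒮 be a family of q-element subsets of V. Then there exists a subfamily 𝒮' ⊆ 𝒮 with |𝒮'| ≤ binomial(2·k·q + q·(q−1)/2 + q, q) such that for every X ⊆ T: if some Y ∈ 𝒮 extends X with respect to A, then some Y' ∈ 𝒮' extends X with respect to A. -/

import Mathlib

/-- The principal submatrix `A[S]` of a matrix `A` indexed by `V`, for `S ⊆ V`. -/
def principalSub {V F : Type*} (A : Matrix V V F) (S : Finset V) : Matrix ↥S ↥S F :=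
  A.submatrix (fun x => (x : V)) (fun x => (x : V))

/-- `Y` extends `X` with respect to `A`: `X ∩ Y = ∅` and `A[X ∪ Y]` is nonsingular. -/
def ExtendsIn {V F : Type*} [DecidableEq V] [Field F] (A : Matrix V V F)
    (X Y : Finset V) : Prop :=
  X ∩ Y = ∅ ∧ (principalSub A (X ∪ Y)).det ≠ 0

/-!
For `X ⊆ T` and an enumeration of `Y`, the determinant of `A` on `X` followed by `Y` is nonzero
exactly when `Y` extends `X`: a common element gives a repeated row. By a rank factorization of the
columns in `T`, this matrix is `A[X]` bordered by rows described by `k * q` parameters, together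
with the `q * (q - 1) / 2` entries of `A[Y]` above the diagonal, and these parameters depend only
on `Y`. As a polynomial in the parameters the determinant has degree at most `2 * q`, but it is the
square of a Pfaffian, of degree at most `q`. So `Y` extends `X` when a polynomial of degree at most
`q`, depending only on `X`, does not vanish at the point given by `Y`, and it suffices to keep
points whose evaluation functionals span those of the whole family.
-/

open Matrix MvPolynomial Module

/-- Alternating matrices, i.e. skew-symmetric matrices with zero diagonal; the diagonal condition
is a separate field because it does not follow from skew symmetry in characteristic two. -/
structure IsAlternatingMatrix {n R : Type*} [Ring R] (M : Matrix n n R) : Prop where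
  skew : ∀ i j, M i j = -M j i
  diag : ∀ i, M i i = 0

namespace IsAlternatingMatrix

variable {m n R S : Type*}

protected lemma submatrix [Ring R] {M : Matrix n n R} (hM : IsAlternatingMatrix M) (f : m → n) :
    IsAlternatingMatrix (M.submatrix f f) :=
  ⟨fun _ _ => hM.skew _ _, fun _ => hM.diag _⟩

protected lemma map [Ring R] [Ring S] {M : Matrix n n R} (hM : IsAlternatingMatrix M)
    (f : R →+* S) : IsAlternatingMatrix (M.map f) :=
  ⟨fun i j => by simp only [map_apply]; rw [hM.skew, map_neg], fun i => by simp [hM.diag]⟩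

protected lemma fromBlocks [Ring R] {A : Matrix m m R} {D : Matrix n n R}
    (hA : IsAlternatingMatrix A) (C : Matrix n m R) (hD : IsAlternatingMatrix D) :
    IsAlternatingMatrix (fromBlocks A (-Cᵀ) C D) where
  skew := by
    rintro (i | i) (j | j)
    · exact hA.skew i j
    · rfl
    · exact (neg_neg _).symm
    · exact hD.skew i j
  diag := by
    rintro (i | i)
    · exact hA.diag i
    · exact hD.diag i

lemma exists_det_eq_sq_mul_det {K : Type*} [Field K] [Fintype n] [DecidableEq n]
    {M : Matrix (Fin 2 ⊕ n) (Fin 2 ⊕ n) K} (hM : IsAlternatingMatrix M)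
    (hpivot : M (.inl 0) (.inl 1) ≠ 0) :
    ∃ N : Matrix n n K, IsAlternatingMatrix N ∧ M.det = M (.inl 0) (.inl 1) ^ 2 * N.det := by
  set a := M (.inl 0) (.inl 1) with ha
  let P : Matrix (Fin 2) (Fin 2) K := !![0, -a⁻¹; a⁻¹, 0]
  have hblock : M.toBlocks₁₁ = !![0, a; -a, 0] := by
    ext i j
    fin_cases i <;> fin_cases j <;> simp [toBlocks₁₁, hM.diag, ha, hM.skew (.inl 1) (.inl 0)]
  have hinv : M.toBlocks₁₁ * P = 1 := by
    rw [hblock]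
    ext i j
    fin_cases i <;> fin_cases j <;> simp [P, Matrix.mul_apply, hpivot]
  let : Invertible M.toBlocks₁₁ := ⟨P, mul_eq_one_comm.mp hinv, hinv⟩
  let N := M.toBlocks₂₂ - M.toBlocks₂₁ * P * M.toBlocks₁₂
  have hN : ∀ i j, N i j = M (.inr i) (.inr j) - a⁻¹ *
      (M (.inr i) (.inl 1) * M (.inl 0) (.inr j) - M (.inr i) (.inl 0) * M (.inl 1) (.inr j)) := by
    intro i j
    simp only [N, P, toBlocks₂₂, toBlocks₂₁, toBlocks₁₂, Matrix.sub_apply, of_apply,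
      Matrix.mul_apply, cons_val', cons_val_fin_one, Fin.sum_univ_two, Fin.isValue, cons_val_zero,
      cons_val_one]
    ring
  refine ⟨N, ⟨fun i j => ?_, fun i => ?_⟩, ?_⟩
  · rw [hN, hN, hM.skew (.inr i) (.inr j), hM.skew (.inr i) (.inl 0), hM.skew (.inr i) (.inl 1),
      hM.skew (.inr j) (.inl 0), hM.skew (.inr j) (.inl 1)]
    ring
  · rw [hN, hM.diag, hM.skew (.inr i) (.inl 0), hM.skew (.inr i) (.inl 1)]
    ring
  · calc
      M.det = M.toBlocks₁₁.det * N.det := by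
        conv_lhs => rw [← fromBlocks_toBlocks M]
        exact det_fromBlocks₁₁ ..
      _ = a ^ 2 * N.det := by rw [hblock, det_fin_two_of]; ring

lemma isSquare_det_of_field {K : Type*} [Field K] [Fintype n] [DecidableEq n]
    {M : Matrix n n K} (hM : IsAlternatingMatrix M) : IsSquare M.det := by
  classical
  induction hcard : Fintype.card n using Nat.strong_induction_on generalizing n with
  | _ c ih =>
  by_cases hzero : M = 0
  · cases isEmpty_or_nonempty n <;> simp [hzero]
  obtain ⟨i, j, hij⟩ : ∃ i j, M i j ≠ 0 := by
    by_contra! h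
    exact hzero (Matrix.ext h)
  have hne : i ≠ j := by
    rintro rfl
    exact hij (hM.diag i)
  have hinj : Function.Injective ![i, j] := injective_pair_iff_ne.mpr hne
  let e : Fin 2 ⊕ ↥(Set.range ![i, j])ᶜ ≃ n :=
    ((Equiv.ofInjective _ hinj).sumCongr (Equiv.refl _)).trans (Equiv.Set.sumCompl _)
  obtain ⟨N, hN, hdet⟩ := (hM.submatrix e).exists_det_eq_sq_mul_det hij
  have hlt : Fintype.card ↥(Set.range ![i, j])ᶜ < c := by
    rw [← hcard, ← Fintype.card_congr e, Fintype.card_sum, Fintype.card_fin]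
    omega
  rw [← det_submatrix_equiv_self e M, hdet]
  exact (IsSquare.sq _).mul (ih _ hlt hN rfl)

theorem isSquare_det [CommRing R] [IsDomain R] [IsIntegrallyClosed R] [Fintype n] [DecidableEq n]
    {M : Matrix n n R} (hM : IsAlternatingMatrix M) : IsSquare M.det := by
  let K := FractionRing R
  obtain ⟨r, hr⟩ := (hM.map (algebraMap R K)).isSquare_det_of_field
  have hdet : algebraMap R K M.det = r * r := by rw [← hr, RingHom.map_det]; rfl
  obtain ⟨s, rfl⟩ : ∃ s, algebraMap R K s = r := by
    refine IsIntegrallyClosed.exists_algebraMap_eq_of_isIntegral_pow two_pos ?_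
    rw [sq, ← hdet]
    exact isIntegral_algebraMap
  rw [← map_mul] at hdet
  exact ⟨s, IsFractionRing.injective R K hdet⟩

end IsAlternatingMatrix

lemma eRank_eq_natCast_rank {m n R : Type*} [CommSemiring R] [StrongRankCondition R] [Fintype n]
    (M : Matrix m n R) : M.eRank = M.rank := by
  have hfin : M.eRank ≠ ⊤ := ne_top_of_le_ne_top (by simp) M.eRank_le_card_width
  rw [← eRank_toNat_eq_rank, ENat.natCast_toNat hfin]

lemma exists_eq_mul_of_eRank_eq {m n F : Type*} [Field F] {M : Matrix m n F} {k : ℕ}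
    (hM : M.eRank = k) :
    ∃ (W : Matrix m (Fin k) F) (U : Matrix (Fin k) n F), M = W * U := by
  let N := Submodule.span F (Set.range M.col)
  have hrank : Module.rank F N = k := Cardinal.toENat_eq_natCast.mp hM
  have : Module.Finite F N := finite_of_rank_eq_nat hrank
  let b := finBasisOfFinrankEq F N (finrank_eq_of_rank_eq hrank)
  let c (y : n) : N := ⟨M.col y, Submodule.subset_span ⟨y, rfl⟩⟩
  refine ⟨of fun x l => (b l : m → F) x, of fun l y => b.repr (c y) l, ?_⟩
  ext x y
  have h := congrFun (congrArg N.subtype (b.sum_repr (c y))) x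
  simp only [map_sum, map_smul, Submodule.subtype_apply, Finset.sum_apply, Pi.smul_apply,
    smul_eq_mul] at h
  simpa only [Matrix.mul_apply, of_apply, mul_comm, c] using! h.symm

lemma finrank_restrictTotalDegree (σ R : Type*) [Fintype σ] [CommSemiring R]
    [StrongRankCondition R] (q : ℕ) :
    finrank R (restrictTotalDegree σ R q) = (Fintype.card σ + q).choose q := by
  classical
  have hmem (f : Option σ →₀ ℕ) :
      f ∈ (Finset.univ : Finset (Option σ)).finsuppAntidiag q ↔
        f none + f.some.sum (fun _ n => n) = q := by
    simp [Finset.mem_finsuppAntidiag, Finsupp.sum_fintype, Fintype.sum_option]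
  let e : {d : σ →₀ ℕ | (d.sum fun _ n => n) ≤ q} ≃
      (Finset.univ : Finset (Option σ)).finsuppAntidiag q :=
    { toFun d := ⟨d.1.optionElim (q - d.1.sum fun _ n => n), by
        rw [hmem, Finsupp.optionElim_apply_none, Finsupp.some_optionElim]
        exact Nat.sub_add_cancel d.2⟩
      invFun f := ⟨f.1.some, (Nat.le_add_left _ _).trans_eq ((hmem _).mp f.2)⟩
      left_inv d := by ext; simp
      right_inv f := by
        ext (_ | a)
        · simpa using Nat.sub_eq_of_eq_add ((hmem _).mp f.2).symm
        · simp }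
  rw [restrictTotalDegree, finrank_eq_nat_card_basis (basisRestrictSupport R _), Nat.card_congr e,
    Nat.card_eq_fintype_card, Fintype.card_coe, Finset.card_finsuppAntidiag_nat_eq_choose,
    Finset.card_univ, Fintype.card_option]
  congr 1
  omega

lemma exists_finset_image_subset_span {α F M : Type*} [DivisionRing F] [AddCommGroup M]
    [Module F M] [Module.Finite F M] (v : α → M) (S : Set α) :
    ∃ S' : Finset α, ↑S' ⊆ S ∧ S'.card ≤ finrank F M ∧ v '' S ⊆ Submodule.span F (v '' S') := by
  obtain ⟨b, hbS, -, hspan, hli⟩ :=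
    exists_linearIndepOn_extension (linearIndepOn_empty F v) (Set.empty_subset S)
  have : Finite b := hli.finite
  lift b to Finset α using Set.toFinite b
  exact ⟨b, hbS, by simpa using hli.fintype_card_le_finrank, hspan⟩

lemma exists_finset_forall_eval_eq_zero {α σ F : Type*} [Field F] [Fintype σ]
    (z : α → σ → F) (S : Set α) (q : ℕ) :
    ∃ S' : Finset α, ↑S' ⊆ S ∧ S'.card ≤ (Fintype.card σ + q).choose q ∧
      ∀ p : MvPolynomial σ F, p.totalDegree ≤ q →
        (∀ a ∈ S', eval (z a) p = 0) → ∀ a ∈ S, eval (z a) p = 0 := by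
  let P := restrictTotalDegree σ F q
  let ev (a : α) : Dual F P := (aeval (z a)).toLinearMap ∘ₗ P.subtype
  obtain ⟨S', hS', hcard, hspan⟩ := exists_finset_image_subset_span (F := F) ev S
  rw [Subspace.dual_finrank_eq, finrank_restrictTotalDegree] at hcard
  refine ⟨S', hS', hcard, fun p hp hzero a ha => ?_⟩
  let p' : P := ⟨p, (mem_restrictTotalDegree σ q p).mpr hp⟩
  have hker : Submodule.span F (ev '' S') ≤ LinearMap.ker (Dual.eval F P p') := by
    rw [Submodule.span_le]
    rintro _ ⟨b, hb, rfl⟩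
    exact hzero b hb
  exact hker (hspan ⟨a, ha, rfl⟩)

lemma totalDegree_le_of_mul_self {σ R : Type*} [CommSemiring R] [NoZeroDivisors R]
    {p : MvPolynomial σ R} {q : ℕ} (h : (p * p).totalDegree ≤ 2 * q) : p.totalDegree ≤ q := by
  rcases eq_or_ne p 0 with rfl | hp
  · simp
  · rw [totalDegree_mul_of_isDomain hp hp] at h
    omega

lemma totalDegree_det_le_sum {n σ R : Type*} [CommRing R] [Fintype n] [DecidableEq n]
    {M : Matrix n n (MvPolynomial σ R)} {r c : n → ℕ}
    (hM : ∀ i j, (M i j).totalDegree ≤ r i + c j) :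
    M.det.totalDegree ≤ ∑ i, r i + ∑ j, c j := by
  rw [det_apply]
  refine totalDegree_finsetSum_le fun s _ => (totalDegree_smul_le _ _).trans ?_
  calc
    (∏ i, M (s i) i).totalDegree ≤ ∑ i, (M (s i) i).totalDegree := totalDegree_finsetProd _ _
    _ ≤ ∑ i, (r (s i) + c i) := Finset.sum_le_sum fun i _ => hM _ _
    _ = ∑ i, r i + ∑ j, c j := by rw [Finset.sum_add_distrib, Equiv.sum_comp s r]

section GenericBorder

/-- The variables of `genericBorder`: `k` coefficients for each of `q` new elements, and the
entries above the diagonal of an alternating `q × q` matrix, where `⟨j, i⟩` stands for the entry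
`(i, j)`. -/
abbrev BorderVar (k q : ℕ) : Type := (Fin q × Fin k) ⊕ (Σ j : Fin q, Fin j)

lemma card_borderVar (k q : ℕ) :
    Fintype.card (BorderVar k q) = k * q + q * (q - 1) / 2 := by
  simp only [Fintype.card_sum, Fintype.card_prod, Fintype.card_fin, Fintype.card_sigma]
  rw [Fin.sum_univ_eq_sum_range (fun j => j) q, Finset.sum_range_id, mul_comm]

variable {n R : Type*} [CommRing R] {k q : ℕ}

/-- The generic alternating `q × q` matrix, whose entries above the diagonal are independent
variables; it is the block of `genericBorder` indexed by the new elements. -/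
noncomputable def genericAlternating (R : Type*) [CommRing R] (k q : ℕ) :
    Matrix (Fin q) (Fin q) (MvPolynomial (BorderVar k q) R) :=
  of fun i j =>
    if h : i < j then X (.inr ⟨j, i, h⟩) else if h : j < i then -X (.inr ⟨i, j, h⟩) else 0

/-- The matrix `B` bordered by `q` generic new elements, whose rows are combinations, with
indeterminate coefficients, of the `k` rows of `U`. Its determinant encodes the extensions of a
set by `q` elements. -/
noncomputable def genericBorder (B : Matrix n n R) (U : Matrix (Fin k) n R) (q : ℕ) :
    Matrix (n ⊕ Fin q) (n ⊕ Fin q) (MvPolynomial (BorderVar k q) R) :=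
  let cross := of fun i x => ∑ l, X (.inl (i, l)) * C (U l x)
  fromBlocks (B.map C) (-crossᵀ) cross (genericAlternating R k q)

/-- The point of the parameter space of `genericBorder` given by the coefficients `W` of the new
rows and the alternating block `D`. -/
def borderPoint (W : Matrix (Fin q) (Fin k) R) (D : Matrix (Fin q) (Fin q) R) :
    BorderVar k q → R :=
  Sum.elim (fun p => W p.1 p.2) (fun p => D ⟨p.2, p.2.2.trans p.1.2⟩ p.1)

lemma isAlternatingMatrix_genericAlternating :
    IsAlternatingMatrix (genericAlternating R k q) where
  skew i j := by
    rcases lt_trichotomy i j with h | rfl | h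
    · simp [genericAlternating, h, h.not_gt]
    · simp [genericAlternating]
    · simp [genericAlternating, h, h.not_gt]
  diag i := by simp [genericAlternating]

protected lemma IsAlternatingMatrix.genericBorder {B : Matrix n n R} (hB : IsAlternatingMatrix B)
    (U : Matrix (Fin k) n R) (q : ℕ) : IsAlternatingMatrix (genericBorder B U q) :=
  (hB.map C).fromBlocks _ isAlternatingMatrix_genericAlternating

lemma map_eval_genericAlternating (W : Matrix (Fin q) (Fin k) R) {D : Matrix (Fin q) (Fin q) R}
    (hD : IsAlternatingMatrix D) :
    (genericAlternating R k q).map (eval (borderPoint W D)) = D := by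
  ext i j
  rcases lt_trichotomy i j with h | rfl | h
  · simp [genericAlternating, borderPoint, h]
  · simp [genericAlternating, hD.diag]
  · simp [genericAlternating, borderPoint, h, h.not_gt, hD.skew i j]

lemma map_eval_genericBorder (B : Matrix n n R) (U : Matrix (Fin k) n R)
    (W : Matrix (Fin q) (Fin k) R) {D : Matrix (Fin q) (Fin q) R} (hD : IsAlternatingMatrix D) :
    (genericBorder B U q).map (eval (borderPoint W D)) =
      fromBlocks B (-(W * U)ᵀ) (W * U) D := by
  rw [genericBorder, fromBlocks_map, map_eval_genericAlternating W hD]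
  congr 1 <;> ext i j <;> simp [Matrix.mul_apply, borderPoint, mul_comm]

lemma totalDegree_genericBorder_le [Nontrivial R] (B : Matrix n n R) (U : Matrix (Fin k) n R)
    (i j : n ⊕ Fin q) :
    (genericBorder B U q i j).totalDegree ≤
      Sum.elim (fun _ => 0) (fun _ => 1) i + Sum.elim (fun _ => 0) (fun _ => 1) j := by
  have hcross (i : Fin q) (x : n) :
      (∑ l, X (.inl (i, l)) * C (U l x) : MvPolynomial (BorderVar k q) R).totalDegree ≤ 1 :=
    totalDegree_finsetSum_le fun l _ => (totalDegree_mul _ _).trans (by simp)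
  rcases i with i | i <;> rcases j with j | j
  · simp [genericBorder]
  · simpa [genericBorder] using hcross j i
  · simpa [genericBorder] using hcross i j
  · simp only [genericBorder, genericAlternating, fromBlocks_apply₂₂, of_apply]
    split_ifs <;> simp

lemma exists_det_genericBorder_eq_mul_self [IsDomain R] [UniqueFactorizationMonoid R] [Fintype n]
    [DecidableEq n] {B : Matrix n n R} (hB : IsAlternatingMatrix B) (U : Matrix (Fin k) n R)
    (q : ℕ) :
    ∃ p : MvPolynomial (BorderVar k q) R,
      p.totalDegree ≤ q ∧ (genericBorder B U q).det = p * p := by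
  obtain ⟨p, hp⟩ := (hB.genericBorder U q).isSquare_det
  refine ⟨p, totalDegree_le_of_mul_self ?_, hp⟩
  rw [← hp]
  exact (totalDegree_det_le_sum (totalDegree_genericBorder_le B U)).trans_eq (by simp [two_mul])

end GenericBorder

section Extension

variable {V F ι : Type*} [Field F] {k q : ℕ}

lemma extendsIn_iff_det_submatrix_ne_zero [DecidableEq V] [Fintype ι] [DecidableEq ι]
    (A : Matrix V V F) (X : Finset V) {Y : Finset V} (e : ι ≃ Y) :
    ExtendsIn A X Y ↔ (A.submatrix (Sum.elim ((↑) : X → V) (fun i => (e i : V)))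
      (Sum.elim ((↑) : X → V) (fun i => (e i : V)))).det ≠ 0 := by
  rw [ExtendsIn, ← Finset.disjoint_iff_inter_eq_empty]
  by_cases hXY : Disjoint X Y
  · let g : X ⊕ ι ≃ ↥(X ∪ Y) := ((Equiv.refl X).sumCongr e).trans (Equiv.Finset.union X Y hXY)
    have hg : Sum.elim ((↑) : X → V) (fun i => (e i : V)) = (↑) ∘ g := by
      ext (x | i) <;> rfl
    rw [hg, ← det_submatrix_equiv_self g (principalSub A (X ∪ Y))]
    exact and_iff_right hXY
  · obtain ⟨v, hvX, hvY⟩ := Finset.not_disjoint_iff.mp hXY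
    refine iff_of_false (fun h => hXY h.1) (not_not.mpr ?_)
    refine det_zero_of_row_eq (i := .inl ⟨v, hvX⟩) (j := .inr (e.symm ⟨v, hvY⟩)) (by simp) ?_
    ext
    simp

lemma IsAlternatingMatrix.submatrix_sumElim_eq_fromBlocks {m n R : Type*} [Ring R]
    {A : Matrix V V R} (hA : IsAlternatingMatrix A) {T : Set V} {W : Matrix V (Fin k) R}
    {U : Matrix (Fin k) T R}
    (hWU : A.submatrix id ((↑) : T → V) = W * U) (f : n → T) (e : m → V) :
    A.submatrix (Sum.elim ((↑) ∘ f) e) (Sum.elim ((↑) ∘ f) e) =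
      let C := W.submatrix e id * U.submatrix id f
      fromBlocks (A.submatrix ((↑) ∘ f) ((↑) ∘ f)) (-Cᵀ) C (A.submatrix e e) := by
  have hC (i : m) (x : n) : A (e i) (f x) = (W.submatrix e id * U.submatrix id f) i x :=
    congrFun (congrFun hWU (e i)) (f x)
  ext (x | i) (y | j)
  · rfl
  · exact (hA.skew _ _).trans (congrArg Neg.neg (hC j x))
  · exact hC i y
  · rfl

lemma IsAlternatingMatrix.extendsIn_iff_eval_ne_zero [DecidableEq V] {A : Matrix V V F}
    (hA : IsAlternatingMatrix A) {T : Set V} {W : Matrix V (Fin k) F} {U : Matrix (Fin k) T F}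
    (hWU : A.submatrix id ((↑) : T → V) = W * U) {X Y : Finset V} (hX : ↑X ⊆ T)
    (e : Fin q ≃ Y) :
    ExtendsIn A X Y ↔
      eval (borderPoint (W.submatrix (fun i => (e i : V)) id)
          (A.submatrix (fun i => (e i : V)) (fun i => (e i : V))))
        (genericBorder (principalSub A X) (U.submatrix id (Set.inclusion hX)) q).det ≠ 0 := by
  rw [extendsIn_iff_det_submatrix_ne_zero A X e, RingHom.map_det, RingHom.mapMatrix_apply,
    map_eval_genericBorder _ _ _ (hA.submatrix _)]
  exact (congrArg (fun M => det M ≠ 0)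
    (hA.submatrix_sumElim_eq_fromBlocks hWU (Set.inclusion hX) _)).to_iff

end Extension

theorem stmt_6_general {F V : Type*} [Field F] [DecidableEq V] {A : Matrix V V F}
    (hA : IsAlternatingMatrix A) (T : Set V) (k q : ℕ)
    (hk : (A.submatrix id ((↑) : T → V)).eRank = k)
    (𝒮 : Set (Finset V)) (h𝒮 : ∀ Y ∈ 𝒮, Y.card = q) :
    ∃ 𝒮' : Finset (Finset V), ↑𝒮' ⊆ 𝒮 ∧
      𝒮'.card ≤ (k * q + q * (q - 1) / 2 + q).choose q ∧
      ∀ X : Finset V, ↑X ⊆ T → (∃ Y ∈ 𝒮, ExtendsIn A X Y) → ∃ Y' ∈ 𝒮', ExtendsIn A X Y' := by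
  obtain ⟨W, U, hWU⟩ := exists_eq_mul_of_eRank_eq hk
  have hpoint : ∀ Y ∈ 𝒮, ∃ z : BorderVar k q → F, ∀ (X : Finset V) (hX : ↑X ⊆ T),
      ExtendsIn A X Y ↔ eval z
        (genericBorder (principalSub A X) (U.submatrix id (Set.inclusion hX)) q).det ≠ 0 :=
    fun Y hY => ⟨_, fun X hX =>
      hA.extendsIn_iff_eval_ne_zero hWU hX (Y.equivFinOfCardEq (h𝒮 Y hY)).symm⟩
  choose! z hz using hpoint
  obtain ⟨𝒮', hsub, hcard, hvanish⟩ := exists_finset_forall_eval_eq_zero z 𝒮 q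
  rw [card_borderVar] at hcard
  refine ⟨𝒮', hsub, hcard, fun X hX ⟨Y, hY, hXY⟩ => ?_⟩
  obtain ⟨p, hdeg, hp⟩ := exists_det_genericBorder_eq_mul_self (hA.submatrix ((↑) : X → V))
    (U.submatrix id (Set.inclusion hX)) q
  have hext : ∀ Z ∈ 𝒮, ExtendsIn A X Z ↔ eval (z Z) p ≠ 0 := fun Z hZ => by
    rw [hz Z hZ X hX, principalSub, hp, map_mul, mul_self_ne_zero]
  contrapose! hXY
  exact (hext Y hY).not_left.mpr <| hvanish p hdeg
    (fun Z hZ => (hext Z (hsub hZ)).not_left.mp (hXY Z hZ)) Y hY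

/-- Delta-matroid representative sets, rank version.
Let `A` be a skew-symmetric matrix over a field `F` indexed by a finite set `V`,
`T ⊆ V`, `k` the rank of the column submatrix `A[·,T]`, and `𝒮` a family of
`q`-element subsets of `V`. Then there exists `𝒮' ⊆ 𝒮` with
`|𝒮'| ≤ C(2·k·q + q·(q−1)/2 + q, q)` such that for every `X ⊆ T`: if some `Y ∈ 𝒮`
extends `X` w.r.t. `A`, then some `Y' ∈ 𝒮'` extends `X` w.r.t. `A`. -/
theorem stmt_6 {F : Type*} [Field F] {V : Type*} [Fintype V] [DecidableEq V]
    (A : Matrix V V F) (hskew : ∀ u v, A u v = - A v u) (hdiag : ∀ v, A v v = 0)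
    (T : Finset V) (k q : ℕ)
    (hk : (A.submatrix id (fun t : ↥T => (t : V))).rank = k)
    (𝒮 : Finset (Finset V)) (h𝒮 : ∀ Y ∈ 𝒮, Y.card = q) :
    ∃ 𝒮' ⊆ 𝒮, 𝒮'.card ≤ (2 * k * q + q * (q - 1) / 2 + q).choose q ∧
      ∀ X ⊆ T, (∃ Y ∈ 𝒮, ExtendsIn A X Y) → ∃ Y' ∈ 𝒮', ExtendsIn A X Y' := by
  obtain ⟨𝒮', hsub, hcard, hrep⟩ := stmt_6_general ⟨hskew, hdiag⟩ (T : Set V) k q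
    ((eRank_eq_natCast_rank _).trans (congrArg _ hk)) 𝒮 h𝒮
  refine ⟨𝒮', by exact_mod_cast hsub, hcard.trans (Nat.choose_le_choose q ?_), by simpa using hrep⟩
  gcongr
  exact Nat.le_mul_of_pos_left k two_pos
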